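/- Let U ⊆ ℝⁿ be open, let g^{ij} : U → ℝ be smooth functions such that (g^{ij}(x)) is a symmetric invertible matrix for each x, with inverse matrix (g_{ij}(x)). Let σ : U × U → ℝ be a smooth symmetric function (σ(x,x') = σ(x',x)) satisfying the Hamilton–Jacobi equation σ(x,x') = (1/2) Σ_{i,j} g^{ij}(x) σ_{,i}(x,x') σ_{,j}(x,x') on U × U, together with the initial conditions σ(x,x) = 0 and σ_{,i}(x,x) = 0 for all x ∈ U. Fix x' ∈ U and assume the diagonal Hessian matrix ([σ_{,ij}](x')) is invertible. Then the coincidence limits of the second derivatives are [σ_{,ij}](x') = g_{ij}(x'), [σ_{,i'j'}](x') = g_{ij}(x'), and [σ_{,ij'}](x') = −g_{ij}(x'). -/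

import Mathlib

/-!
Write `H` for the Hessian `[σ_{,ij}]` at `x'` and `G` for the matrix `(g^{ij}(x'))`. Differentiating
the Hamilton–Jacobi equation twice at a point where `σ` has vanishing gradient kills every term in
which some `σ_{,i}` survives undifferentiated, leaving `Hᵀ = H G Hᵀ`. As `H` is invertible, `H G = 1`,
i.e. `H = G⁻¹` (`hess_eq_inv`).

The primed derivatives reduce to this one. The symmetry of `σ` gives `σ_{,j'}(x, x') = σ_{,j}(x', x)`
(`d2_eq_d1_swap`), hence `[σ_{,i'j'}] = [σ_{,ij}]`, and `[∂_i σ_{,j'}] = [∂_{i'} σ_{,j}]`. Since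
`σ_{,j}` vanishes along the diagonal, so does its derivative in the diagonal direction `(e_i, e_i)`,
which says `[∂_{i'} σ_{,j}] = -[∂_i σ_{,j}]` (`d2_d1_eq_neg`).
-/

open scoped BigOperators
open Set

/-- `∂/∂x^i` in the first argument of a two-point function. -/
noncomputable def d1 (n : ℕ) (i : Fin n) (f : (Fin n → ℝ) → (Fin n → ℝ) → ℝ) :
    (Fin n → ℝ) → (Fin n → ℝ) → ℝ :=
  fun x x' => fderiv ℝ (fun y => f y x') x (Pi.single i 1)

/-- `∂/∂x'^i` in the second argument of a two-point function. -/
noncomputable def d2 (n : ℕ) (i : Fin n) (f : (Fin n → ℝ) → (Fin n → ℝ) → ℝ) :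
    (Fin n → ℝ) → (Fin n → ℝ) → ℝ :=
  fun x x' => fderiv ℝ (fun y => f x y) x' (Pi.single i 1)

/-- The matrix of mixed second derivatives `σ_{,ij'} = ∂²σ/∂x^i∂x'^j` at `(x,x')`. -/
noncomputable def mixedHess (n : ℕ) (σ : (Fin n → ℝ) → (Fin n → ℝ) → ℝ)
    (x x' : Fin n → ℝ) : Matrix (Fin n) (Fin n) ℝ :=
  Matrix.of fun i j => d1 n i (d2 n j σ) x x'

/-- The pointwise matrix `(g^{ij}(x))` of a metric-coefficient field. -/
noncomputable def gMat (n : ℕ) (g : Fin n → Fin n → (Fin n → ℝ) → ℝ)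
    (x : Fin n → ℝ) : Matrix (Fin n) (Fin n) ℝ :=
  Matrix.of fun i j => g i j x

section Helpers

variable {n : ℕ} {U : Set (Fin n → ℝ)} {σ : (Fin n → ℝ) → (Fin n → ℝ) → ℝ}

/-- A partial derivative in the first argument is a directional derivative of the function on the
product space. -/
lemma d1_eq_fderiv {f : (Fin n → ℝ) → (Fin n → ℝ) → ℝ} {x y : Fin n → ℝ}
    (hf : DifferentiableAt ℝ (fun p : (Fin n → ℝ) × (Fin n → ℝ) => f p.1 p.2) (x, y))
    (i : Fin n) :
    d1 n i f x y = fderiv ℝ (fun p : (Fin n → ℝ) × (Fin n → ℝ) => f p.1 p.2) (x, y)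
      (Pi.single i 1, 0) := by
  have h := HasFDerivAt.comp (f := fun z => (z, y)) x hf.hasFDerivAt
    ((hasFDerivAt_id x).prodMk (hasFDerivAt_const y x))
  have h' : HasFDerivAt (fun z => f z y) _ x := h
  simp [d1, h'.fderiv]

lemma d2_eq_fderiv {f : (Fin n → ℝ) → (Fin n → ℝ) → ℝ} {x y : Fin n → ℝ}
    (hf : DifferentiableAt ℝ (fun p : (Fin n → ℝ) × (Fin n → ℝ) => f p.1 p.2) (x, y))
    (i : Fin n) :
    d2 n i f x y = fderiv ℝ (fun p : (Fin n → ℝ) × (Fin n → ℝ) => f p.1 p.2) (x, y)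
      (0, Pi.single i 1) := by
  have h := hf.hasFDerivAt.comp y ((hasFDerivAt_const x y).prodMk (hasFDerivAt_id y))
  have h' : HasFDerivAt (fun z => f x z) _ y := h
  simp [d2, h'.fderiv]

lemma contDiffOn_d1 (hU : IsOpen U)
    (hσ : ContDiffOn ℝ (⊤ : ℕ∞) (fun p : (Fin n → ℝ) × (Fin n → ℝ) => σ p.1 p.2) (U ×ˢ U))
    (j : Fin n) :
    ContDiffOn ℝ (⊤ : ℕ∞) (fun p : (Fin n → ℝ) × (Fin n → ℝ) => d1 n j σ p.1 p.2)
      (U ×ˢ U) := by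
  have hUU : IsOpen (U ×ˢ U) := hU.prod hU
  have h := hσ.fderiv_of_isOpen (m := (⊤ : ℕ∞)) hUU (by simp)
  refine (h.clm_apply (contDiffOn_const (c := (Pi.single j 1, 0)))).congr ?_
  rintro ⟨x, y⟩ hp
  exact d1_eq_fderiv ((hσ.differentiableOn (by simp)).differentiableAt (hUU.mem_nhds hp)) j

lemma differentiableAt_d1 (hU : IsOpen U)
    (hσ : ContDiffOn ℝ (⊤ : ℕ∞) (fun p : (Fin n → ℝ) × (Fin n → ℝ) => σ p.1 p.2) (U ×ˢ U))
    (j : Fin n) {x y : Fin n → ℝ} (hx : x ∈ U) (hy : y ∈ U) :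
    DifferentiableAt ℝ (fun p : (Fin n → ℝ) × (Fin n → ℝ) => d1 n j σ p.1 p.2) (x, y) :=
  ((contDiffOn_d1 hU hσ j).differentiableOn (by simp)).differentiableAt
    ((hU.prod hU).mem_nhds ⟨hx, hy⟩)

lemma d2_eq_d1_swap (hU : IsOpen U) (hσsymm : ∀ x ∈ U, ∀ x' ∈ U, σ x x' = σ x' x)
    (j : Fin n) {x y : Fin n → ℝ} (hx : x ∈ U) (hy : y ∈ U) :
    d2 n j σ x y = d1 n j σ y x := by
  have h : (fun z => σ x z) =ᶠ[nhds y] fun z => σ z x := by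
    filter_upwards [hU.mem_nhds hy] with z hz using hσsymm x hx z hz
  simp only [d1, d2, h.fderiv_eq]

/-- `σ_{,j}` vanishes on the diagonal, so its derivatives in the two arguments cancel there. -/
lemma d2_d1_eq_neg (hU : IsOpen U)
    (hσ : ContDiffOn ℝ (⊤ : ℕ∞) (fun p : (Fin n → ℝ) × (Fin n → ℝ) => σ p.1 p.2) (U ×ˢ U))
    (hdiag1 : ∀ x ∈ U, ∀ i : Fin n, d1 n i σ x x = 0)
    {x : Fin n → ℝ} (hx : x ∈ U) (i j : Fin n) :
    d2 n i (d1 n j σ) x x = -d1 n i (d1 n j σ) x x := by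
  have hd := differentiableAt_d1 hU hσ j hx hx
  have h := HasFDerivAt.comp (f := fun z => (z, z)) x hd.hasFDerivAt
    ((hasFDerivAt_id x).prodMk (hasFDerivAt_id x))
  have h0 : HasFDerivAt (fun z => d1 n j σ z z) (0 : (Fin n → ℝ) →L[ℝ] ℝ) x := by
    refine (hasFDerivAt_const (0 : ℝ) x).congr_of_eventuallyEq ?_
    filter_upwards [hU.mem_nhds hx] with z hz using hdiag1 z hz j
  have key := DFunLike.congr_fun (h.unique h0) (Pi.single i 1)
  rw [d1_eq_fderiv hd, d2_eq_fderiv hd, eq_neg_iff_add_eq_zero, ← map_add]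
  simpa using key

/-- The twice differentiated Hamilton–Jacobi equation at a point where `σ` has vanishing gradient,
`Hᵀ = H G Hᵀ`, solved for the Hessian `H`. -/
lemma hess_eq_inv (hU : IsOpen U) (g : Fin n → Fin n → (Fin n → ℝ) → ℝ)
    (hgsmooth : ∀ i j, ContDiffOn ℝ (⊤ : ℕ∞) (g i j) U)
    (hgsymm : ∀ i j, ∀ x ∈ U, g i j x = g j i x)
    (hσ : ContDiffOn ℝ (⊤ : ℕ∞) (fun p : (Fin n → ℝ) × (Fin n → ℝ) => σ p.1 p.2) (U ×ˢ U))
    (hHJ : ∀ x ∈ U, ∀ x' ∈ U,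
      σ x x' = (1 / 2) * ∑ i, ∑ j, g i j x * d1 n i σ x x' * d1 n j σ x x')
    {x' : Fin n → ℝ} (hx' : x' ∈ U) (hgrad : ∀ i : Fin n, d1 n i σ x' x' = 0)
    (hhess : IsUnit (Matrix.of fun i j => d1 n i (d1 n j σ) x' x' :
      Matrix (Fin n) (Fin n) ℝ).det) :
    (Matrix.of fun i j => d1 n i (d1 n j σ) x' x' : Matrix (Fin n) (Fin n) ℝ)
      = (gMat n g x')⁻¹ := by
  set s : Fin n → (Fin n → ℝ) → ℝ := fun i y => d1 n i σ y x' with hs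
  have hsC : ∀ i, ContDiffOn ℝ (⊤ : ℕ∞) (s i) U := fun i =>
    (contDiffOn_d1 hU hσ i).comp (contDiffOn_id.prodMk contDiffOn_const)
      fun y hy => ⟨hy, hx'⟩
  have hsd : ∀ i, ∀ y ∈ U, DifferentiableAt ℝ (s i) y := fun i y hy =>
    ((hsC i).differentiableOn (by simp)).differentiableAt (hU.mem_nhds hy)
  have hgd : ∀ i j, ∀ y ∈ U, DifferentiableAt ℝ (g i j) y := fun i j y hy =>
    ((hgsmooth i j).differentiableOn (by simp)).differentiableAt (hU.mem_nhds hy)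
  -- The once differentiated equation, with the coefficient of `s j` collected into `A k j`.
  set A : Fin n → Fin n → (Fin n → ℝ) → ℝ := fun k j y =>
    ∑ i, ((1 / 2) * (fderiv ℝ (g i j) y (Pi.single k 1) * s i y)
      + g i j y * fderiv ℝ (s i) y (Pi.single k 1)) with hA
  have hAd : ∀ k j, DifferentiableAt ℝ (A k j) x' := by
    intro k j
    have hdir : ∀ f : (Fin n → ℝ) → ℝ, ContDiffOn ℝ (⊤ : ℕ∞) f U →
        DifferentiableAt ℝ (fun y => fderiv ℝ f y (Pi.single k 1)) x' := fun f hf =>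
      (((hf.fderiv_of_isOpen (m := (⊤ : ℕ∞)) hU (by simp)).clm_apply
        contDiffOn_const).differentiableOn (by simp)).differentiableAt (hU.mem_nhds hx')
    refine DifferentiableAt.fun_sum fun i _ => ?_
    exact (((hdir _ (hgsmooth i j)).mul (hsd i x' hx')).const_mul _).add
      ((hgd i j x' hx').mul (hdir _ (hsC i)))
  have hfirst : ∀ k, ∀ y ∈ U, s k y = ∑ j, A k j y * s j y := by
    intro k y hy
    have hev : (fun z => σ z x') =ᶠ[nhds y]
        fun z => (1 / 2) * ∑ i, ∑ j, g i j z * s i z * s j z := by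
      filter_upwards [hU.mem_nhds hy] with z hz using hHJ z hz x' hx'
    have hder : HasFDerivAt (fun z => (1 / 2 : ℝ) * ∑ i, ∑ j, g i j z * s i z * s j z) _ y :=
      (HasFDerivAt.fun_sum fun i (_ : i ∈ Finset.univ) =>
        HasFDerivAt.fun_sum fun j (_ : j ∈ Finset.univ) =>
          ((hgd i j y hy).hasFDerivAt.mul (hsd i y hy).hasFDerivAt).mul
            (hsd j y hy).hasFDerivAt).const_mul (1 / 2 : ℝ)
    have hsk : s k y = fderiv ℝ (fun z => σ z x') y (Pi.single k 1) := rfl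
    rw [hsk, hev.fderiv_eq, hder.fderiv]
    -- The two terms where a factor `σ_{,i}` is differentiated agree, by the symmetry of `g`.
    have hsw : ∑ i, ∑ j, g i j y * s i y * fderiv ℝ (s j) y (Pi.single k 1)
        = ∑ i, ∑ j, g i j y * s j y * fderiv ℝ (s i) y (Pi.single k 1) := by
      rw [Finset.sum_comm]
      refine Finset.sum_congr rfl fun i _ => Finset.sum_congr rfl fun j _ => ?_
      rw [hgsymm j i y hy]
    have hR : ∑ j, A k j y * s j y = (1 / 2) * ∑ i, ∑ j,
        fderiv ℝ (g i j) y (Pi.single k 1) * s i y * s j y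
        + ∑ i, ∑ j, g i j y * s j y * fderiv ℝ (s i) y (Pi.single k 1) := by
      simp only [hA, Finset.sum_mul, Finset.mul_sum]
      rw [Finset.sum_comm]
      simp only [← Finset.sum_add_distrib]
      refine Finset.sum_congr rfl fun i _ => Finset.sum_congr rfl fun j _ => ?_
      ring
    have hL : ∑ i, ∑ j, (g i j y * s i y * fderiv ℝ (s j) y (Pi.single k 1)
          + s j y * (g i j y * fderiv ℝ (s i) y (Pi.single k 1)
            + s i y * fderiv ℝ (g i j) y (Pi.single k 1)))
        = ∑ i, ∑ j, g i j y * s i y * fderiv ℝ (s j) y (Pi.single k 1)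
          + ∑ i, ∑ j, g i j y * s j y * fderiv ℝ (s i) y (Pi.single k 1)
          + ∑ i, ∑ j, fderiv ℝ (g i j) y (Pi.single k 1) * s i y * s j y := by
      simp only [← Finset.sum_add_distrib]
      refine Finset.sum_congr rfl fun i _ => Finset.sum_congr rfl fun j _ => ?_
      ring
    rw [hR]
    simp only [_root_.smul_apply, _root_.sum_apply, _root_.add_apply, smul_eq_mul, Pi.mul_apply]
    rw [hL, hsw]
    ring
  have hs0 : ∀ i, s i x' = 0 := hgrad
  have hA0 : ∀ k j, A k j x' = ∑ i, g i j x' * d1 n k (d1 n i σ) x' x' := by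
    intro k j
    simp only [hA, hs0]
    simp [d1, hs]
  have hsecond : ∀ l k, d1 n l (d1 n k σ) x' x'
      = ∑ j, A k j x' * d1 n l (d1 n j σ) x' x' := by
    intro l k
    have hev : s k =ᶠ[nhds x'] fun y => ∑ j, A k j y * s j y := by
      filter_upwards [hU.mem_nhds hx'] with z hz using hfirst k z hz
    have hder : HasFDerivAt (fun y => ∑ j, A k j y * s j y) _ x' :=
      HasFDerivAt.fun_sum fun j (_ : j ∈ Finset.univ) =>
        (hAd k j).hasFDerivAt.mul (hsd j x' hx').hasFDerivAt
    have hsl : ∀ m, d1 n l (d1 n m σ) x' x' = fderiv ℝ (s m) x' (Pi.single l 1) :=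
      fun _ => rfl
    rw [hsl, hev.fderiv_eq, hder.fderiv]
    simp [hs0, hsl]
  set H : Matrix (Fin n) (Fin n) ℝ := Matrix.of fun i j => d1 n i (d1 n j σ) x' x' with hH
  have hmat : H * gMat n g x' * H.transpose = 1 * H.transpose := by
    ext k l
    rw [one_mul, Matrix.mul_apply, Matrix.transpose_apply, hH, Matrix.of_apply, hsecond l k]
    refine Finset.sum_congr rfl fun j _ => ?_
    rw [hA0, Matrix.mul_apply]
    simp [gMat, mul_comm]
  have hunit : IsUnit H.transpose :=
    (Matrix.isUnit_iff_isUnit_det _).2 (by rwa [Matrix.det_transpose])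
  exact (Matrix.inv_eq_left_inv (hunit.mul_right_cancel hmat)).symm

end Helpers

/-- Coincidence limits of the second derivatives of the Ruse–Synge function:
`[σ_{,ij}] = [σ_{,i'j'}] = −[σ_{,ij'}] = g_{ij}` (the inverse metric matrix). -/
theorem ruseSynge_second_coincidence (n : ℕ) (hn : 1 ≤ n)
    (U : Set (Fin n → ℝ)) (hU : IsOpen U)
    (g : Fin n → Fin n → (Fin n → ℝ) → ℝ)
    (hgsmooth : ∀ i j, ContDiffOn ℝ (⊤ : ℕ∞) (g i j) U)
    (hgsymm : ∀ i j, ∀ x ∈ U, g i j x = g j i x)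
    (hginv : ∀ x ∈ U, IsUnit (gMat n g x).det)
    (σ : (Fin n → ℝ) → (Fin n → ℝ) → ℝ)
    (hσ : ContDiffOn ℝ (⊤ : ℕ∞) (fun p : (Fin n → ℝ) × (Fin n → ℝ) => σ p.1 p.2) (U ×ˢ U))
    (hσsymm : ∀ x ∈ U, ∀ x' ∈ U, σ x x' = σ x' x)
    (hHJ : ∀ x ∈ U, ∀ x' ∈ U,
      σ x x' = (1 / 2) * ∑ i, ∑ j, g i j x * d1 n i σ x x' * d1 n j σ x x')
    (hdiag0 : ∀ x ∈ U, σ x x = 0)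
    (hdiag1 : ∀ x ∈ U, ∀ i : Fin n, d1 n i σ x x = 0)
    (x' : Fin n → ℝ) (hx' : x' ∈ U)
    (hhess : IsUnit (Matrix.of fun i j => d1 n i (d1 n j σ) x' x' :
      Matrix (Fin n) (Fin n) ℝ).det) :
    ∀ i j : Fin n,
      d1 n i (d1 n j σ) x' x' = (gMat n g x')⁻¹ i j ∧
      d2 n i (d2 n j σ) x' x' = (gMat n g x')⁻¹ i j ∧
      d1 n i (d2 n j σ) x' x' = -(gMat n g x')⁻¹ i j := by
  intro i j
  have hH := hess_eq_inv hU g hgsmooth hgsymm hσ hHJ hx' (hdiag1 x' hx') hhess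
  have h11 : d1 n i (d1 n j σ) x' x' = (gMat n g x')⁻¹ i j := by
    rw [← hH, Matrix.of_apply]
  refine ⟨h11, ?_, ?_⟩
  · have hev : (fun y => d2 n j σ x' y) =ᶠ[nhds x'] fun y => d1 n j σ y x' := by
      filter_upwards [hU.mem_nhds hx'] with y hy using d2_eq_d1_swap hU hσsymm j hx' hy
    rw [← h11, d2, d1, hev.fderiv_eq]
  · have hev : (fun y => d2 n j σ y x') =ᶠ[nhds x'] fun y => d1 n j σ x' y := by
      filter_upwards [hU.mem_nhds hx'] with y hy using d2_eq_d1_swap hU hσsymm j hy hx'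
    rw [← h11, ← d2_d1_eq_neg hU hσ hdiag1 hx', d1, d2, hev.fderiv_eq]
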